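/- For every pure strategy s_I of Player I in the binary Gale–Stewart game, dim_H(⟦s_I⟧) = 1/2; likewise, for every pure strategy s_II of Player II, dim_H(⟦s_II⟧) = 1/2. -/

import Mathlib

open Metric Set Filter MeasureTheory

noncomputable local instance : MetricSpace (ℕ → Bool) := PiNat.metricSpace

/-- The finite prefix `⟨x 0, …, x (n-1)⟩` of a play. -/
def prefixList (x : ℕ → Bool) (n : ℕ) : List Bool := List.ofFn fun i : Fin n => x i

/-- `x` is a play consistent with the Player I pure strategy `sI`. -/
def ConsistentI (sI : List Bool → Bool) (x : ℕ → Bool) : Prop :=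
  ∀ n : ℕ, Even n → x n = sI (prefixList x n)

/-- `x` is a play consistent with the Player II pure strategy `sII`. -/
def ConsistentII (sII : List Bool → Bool) (x : ℕ → Bool) : Prop :=
  ∀ n : ℕ, Odd n → x n = sII (prefixList x n)

/-!
Let `p` be the set of positions at which the moves are free, the others being dictated by a
strategy. A play is determined up to time `n` by its first `Nat.count p n` free moves, so the plays
are covered by `2 ^ Nat.count p n` sets of diameter at most `2⁻¹ ^ n`; this bounds the dimension
above by the lower density of `p`. Conversely, reading off the free moves maps the plays onto the
whole sequence space, which has dimension at least `1`, and this map is Hölder with any exponent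
below the lower density. For either player the free positions form a residue class modulo `2`.
-/

open PiNat
open scoped NNReal ENNReal Topology

theorem dimH_le_of_frequently_card_mul_rpow_le {X β : Type*} [EMetricSpace X] {ι : β → Type*}
    [∀ n, Fintype (ι n)] {l : Filter β} {S : Set X} {d C : ℝ≥0} {r : β → ℝ≥0∞}
    (hr : Tendsto r l (𝓝 0)) (t : ∀ n, ι n → Set X) (ht : ∀ᶠ n in l, ∀ i, ediam (t n i) ≤ r n)
    (hS : ∀ᶠ n in l, S ⊆ ⋃ i, t n i)
    (hcard : ∃ᶠ n in l, (Fintype.card (ι n) : ℝ≥0∞) * r n ^ (d : ℝ) ≤ C) :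
    dimH S ≤ d := by
  borelize X
  have hsum : ∃ᶠ n in l, ∑ i, ediam (t n i) ^ (d : ℝ) ≤ C := by
    refine (hcard.and_eventually ht).mono fun n ⟨hC, hn⟩ => ?_
    calc ∑ i, ediam (t n i) ^ (d : ℝ) ≤ ∑ _i : ι n, r n ^ (d : ℝ) := by
          gcongr with i
          exact hn i
      _ = Fintype.card (ι n) * r n ^ (d : ℝ) := by simp
      _ ≤ C := hC
  have hμ : μH[d] S ≤ C :=
    (Measure.hausdorffMeasure_le_liminf_sum d S r hr t ht hS).trans
      (liminf_le_of_frequently_le' hsum)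
  exact dimH_le_of_hausdorffMeasure_ne_top (ne_top_of_le_ne_top ENNReal.coe_ne_top hμ)

section Cylinder

variable {E : ℕ → Type*} [∀ n, TopologicalSpace (E n)] [∀ n, DiscreteTopology (E n)]

attribute [local instance] PiNat.metricSpace

theorem edist_eq_inv_two_pow_firstDiff {x y : ∀ n, E n} (h : x ≠ y) :
    edist x y = 2⁻¹ ^ firstDiff x y := by
  rw [edist_dist, dist_eq_of_ne h, ENNReal.ofReal_pow (by positivity), one_div,
    ENNReal.ofReal_inv_of_pos two_pos, ENNReal.ofReal_ofNat]

theorem edist_le_inv_two_pow_of_mem_cylinder {x y : ∀ n, E n} {n : ℕ} (h : y ∈ cylinder x n) :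
    edist x y ≤ 2⁻¹ ^ n := by
  rcases eq_or_ne x y with rfl | hxy
  · simp
  · rw [edist_eq_inv_two_pow_firstDiff hxy]
    exact pow_le_pow_right_of_le_one' (by simp)
      ((mem_cylinder_iff_le_firstDiff hxy n).1 ((mem_cylinder_comm x y n).1 h))

theorem holderWith_of_forall_mem_cylinder {Y : Type*} [PseudoEMetricSpace Y] {C d : ℝ≥0}
    {f : (∀ n, E n) → Y}
    (h : ∀ n, ∀ x, ∀ y ∈ cylinder x n, edist (f x) (f y) ≤ C * (2⁻¹ ^ n) ^ (d : ℝ)) :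
    HolderWith C d f := by
  intro x y
  rcases eq_or_ne x y with rfl | hxy
  · simp
  · rw [edist_eq_inv_two_pow_firstDiff hxy]
    exact h _ x y ((mem_cylinder_comm _ _ _).1 (mem_cylinder_firstDiff x y))

end Cylinder

/-- The real number in `[0, 1]` with binary digits `w`. -/
noncomputable def binaryReal (w : ℕ → Bool) : ℝ :=
  Real.ofDigits (b := 2) fun i => if w i then 1 else 0

theorem lipschitzWith_binaryReal : LipschitzWith 1 binaryReal := by
  rw [← holderWith_one]
  refine holderWith_of_forall_mem_cylinder fun n x y hy => ?_
  have hdist : dist (binaryReal x) (binaryReal y) ≤ (((2 : ℕ) : ℝ) ^ n)⁻¹ :=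
    Real.abs_ofDigits_sub_ofDigits_le fun i hi => by rw [hy i hi]
  rw [edist_dist]
  refine (ENNReal.ofReal_le_ofReal hdist).trans_eq ?_
  rw [ENNReal.ofReal_inv_of_pos (by positivity), ENNReal.ofReal_pow (by positivity)]
  simp [ENNReal.inv_pow]

theorem Icc_subset_range_binaryReal : Icc 0 1 ⊆ range binaryReal := by
  intro a ha
  obtain ⟨digits, -, rfl⟩ := Real.ofDigits_SurjOn one_lt_two ha
  refine ⟨fun i => decide (digits i = 1), congrArg Real.ofDigits (funext fun i => ?_)⟩
  have bit_eq : ∀ b : Fin 2, (if decide (b = 1) then 1 else 0) = b := by decide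
  exact bit_eq (digits i)

theorem one_le_dimH_univ_nat_bool : 1 ≤ dimH (univ : Set (ℕ → Bool)) :=
  calc (1 : ℝ≥0∞) = dimH (Icc (0 : ℝ) 1) := by
        rw [Real.dimH_of_nonempty_interior (by simp), Module.finrank_self, Nat.cast_one]
    _ ≤ dimH (range binaryReal) := dimH_mono Icc_subset_range_binaryReal
    _ ≤ dimH univ := lipschitzWith_binaryReal.dimH_range_le

theorem prefixList_succ (x : ℕ → Bool) (n : ℕ) :
    prefixList x (n + 1) = prefixList x n ++ [x n] := by
  simp only [prefixList, List.ofFn_succ_last, Fin.val_castSucc, Fin.val_last]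

theorem prefixList_eq_of_mem_cylinder {x y : ℕ → Bool} {n : ℕ} (h : y ∈ cylinder x n) :
    prefixList y n = prefixList x n :=
  congrArg List.ofFn (funext fun i => h i i.2)

/-- The plays in which every move at a position outside `p` is dictated by `s`. The plays consistent
with a strategy of Player I are those with `p` the odd numbers, and for Player II those with `p` the
even numbers. -/
def playsFreeOn (p : ℕ → Prop) (s : List Bool → Bool) : Set (ℕ → Bool) :=
  {x | ∀ n, ¬p n → x n = s (prefixList x n)}

/-- The subsequence of the moves of `x` at the positions in `p`. If `p` is finite, the tail repeats
`x 0`, since `Nat.nth p` is `0` there. -/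
noncomputable def freeMoves (p : ℕ → Prop) (x : ℕ → Bool) : ℕ → Bool :=
  fun i => x (Nat.nth p i)

/-- The first `n` moves of the play that follows `s` outside `p` and whose moves at the positions in
`p` are given by `w`. -/
def playPrefix (p : ℕ → Prop) [DecidablePred p] (s : List Bool → Bool) (w : ℕ → Bool) :
    ℕ → List Bool
  | 0 => []
  | n + 1 => playPrefix p s w n ++ [if p n then w (Nat.count p n) else s (playPrefix p s w n)]

theorem surjOn_freeMoves {p : ℕ → Prop} (hp : {n | p n}.Infinite) (s : List Bool → Bool) :
    SurjOn (freeMoves p) (playsFreeOn p s) univ := by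
  classical
  intro w _
  let x : ℕ → Bool := fun n => if p n then w (Nat.count p n) else s (playPrefix p s w n)
  have prefixList_x (n : ℕ) : prefixList x n = playPrefix p s w n := by
    induction n with
    | zero => rfl
    | succ n ih => rw [prefixList_succ, ih, playPrefix]
  refine ⟨x, fun n hn => ?_, funext fun i => ?_⟩
  · rw [prefixList_x]
    exact if_neg hn
  · exact (if_pos (Nat.nth_mem_of_infinite hp i)).trans
      (congrArg w (Nat.count_nth_of_infinite hp i))

section FreeMoves

variable {p : ℕ → Prop} [DecidablePred p] {s : List Bool → Bool} {d : ℝ≥0}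

theorem freeMoves_mem_cylinder {x y : ℕ → Bool} {n : ℕ} (h : y ∈ cylinder x n) :
    freeMoves p y ∈ cylinder (freeMoves p x) (Nat.count p n) :=
  fun _ hi => h _ (Nat.nth_lt_of_lt_count hi)

theorem mem_cylinder_of_freeMoves_mem_cylinder {x y : ℕ → Bool} (hx : x ∈ playsFreeOn p s)
    (hy : y ∈ playsFreeOn p s) {n : ℕ}
    (h : freeMoves p y ∈ cylinder (freeMoves p x) (Nat.count p n)) : y ∈ cylinder x n := by
  intro k
  induction k using Nat.strong_induction_on with
  | _ k ih =>
    intro hk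
    by_cases hpk : p k
    · simpa only [freeMoves, Nat.nth_count hpk] using h _ (Nat.count_strict_mono hpk hk)
    · rw [hx k hpk, hy k hpk,
        prefixList_eq_of_mem_cylinder fun i hi => ih i hi (hi.trans hk)]

theorem holderWith_freeMoves {k : ℝ≥0} (h : ∀ n : ℕ, d * n ≤ Nat.count p n + k) :
    HolderWith (2 ^ (k : ℝ)) d (freeMoves p) := by
  refine holderWith_of_forall_mem_cylinder fun n x y hy => ?_
  have hexp : -(Nat.count p n : ℝ) ≤ k + -(n * d) := by
    have := NNReal.coe_le_coe.2 (h n)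
    push_cast at this
    linarith
  calc edist (freeMoves p x) (freeMoves p y)
      ≤ 2⁻¹ ^ Nat.count p n := edist_le_inv_two_pow_of_mem_cylinder (freeMoves_mem_cylinder hy)
    _ = 2 ^ (-(Nat.count p n : ℝ)) := by
        rw [← ENNReal.rpow_natCast, ENNReal.inv_rpow, ENNReal.rpow_neg]
    _ ≤ 2 ^ ((k : ℝ) + -(n * d)) := ENNReal.rpow_le_rpow_of_exponent_le one_le_two hexp
    _ = 2 ^ (k : ℝ) * (2⁻¹ ^ n) ^ (d : ℝ) := by
        rw [ENNReal.rpow_add _ _ two_ne_zero ENNReal.ofNat_ne_top, ← ENNReal.rpow_natCast,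
          ← ENNReal.rpow_mul, ENNReal.inv_rpow, ENNReal.rpow_neg]
    _ = ((2 ^ (k : ℝ) : ℝ≥0) : ℝ≥0∞) * (2⁻¹ ^ n) ^ (d : ℝ) := by
        rw [ENNReal.coe_rpow_of_nonneg _ k.coe_nonneg, ENNReal.coe_ofNat]

theorem exists_forall_mul_le_count_add (h : ∀ᶠ n : ℕ in atTop, d * n ≤ Nat.count p n) :
    ∃ k : ℝ≥0, ∀ n : ℕ, d * n ≤ Nat.count p n + k := by
  obtain ⟨N, hN⟩ := eventually_atTop.1 h
  refine ⟨d * N, fun n => ?_⟩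
  rcases le_total N n with hn | hn
  · exact (hN n hn).trans le_self_add
  · exact le_add_left (by gcongr)

theorem infinite_of_eventually_mul_le_count (hd : 0 < d)
    (h : ∀ᶠ n : ℕ in atTop, d * n ≤ Nat.count p n) : {n | p n}.Infinite := by
  intro hfin
  have hlarge : ∀ᶠ n : ℕ in atTop, (hfin.toFinset.card : ℝ≥0) < d * n :=
    (tendsto_natCast_atTop_atTop.const_mul_atTop hd).eventually_gt_atTop _
  obtain ⟨n, hle, hlt⟩ := (h.and hlarge).exists
  exact (hlt.trans_le hle).not_ge (by exact_mod_cast Nat.count_le_card hfin n)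

theorem le_dimH_playsFreeOn (h : ∀ᶠ n : ℕ in atTop, d * n ≤ Nat.count p n)
    (s : List Bool → Bool) : d ≤ dimH (playsFreeOn p s) := by
  rcases eq_zero_or_pos d with rfl | hd
  · simp
  obtain ⟨k, hk⟩ := exists_forall_mul_le_count_add h
  have hsurj := surjOn_freeMoves (infinite_of_eventually_mul_le_count hd h) s
  have hdim : 1 ≤ dimH (playsFreeOn p s) / d :=
    one_le_dimH_univ_nat_bool.trans <| (dimH_mono hsurj).trans <|
      (holderWith_freeMoves hk).dimH_image_le hd _
  rwa [ENNReal.le_div_iff_mul_le (by simp [hd.ne']) (by simp), one_mul] at hdim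

theorem ediam_setOf_freeMoves_eq_le (p : ℕ → Prop) [DecidablePred p] (s : List Bool → Bool)
    (n : ℕ) (w : Fin (Nat.count p n) → Bool) :
    ediam {x ∈ playsFreeOn p s | ∀ i : Fin _, freeMoves p x i = w i} ≤ 2⁻¹ ^ n :=
  ediam_le fun _ hx _ hy =>
    edist_le_inv_two_pow_of_mem_cylinder <|
      mem_cylinder_of_freeMoves_mem_cylinder hx.1 hy.1 fun i hi =>
        (hy.2 ⟨i, hi⟩).trans (hx.2 ⟨i, hi⟩).symm

theorem dimH_playsFreeOn_le (h : ∃ᶠ n : ℕ in atTop, (Nat.count p n : ℝ≥0) ≤ d * n)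
    (s : List Bool → Bool) : dimH (playsFreeOn p s) ≤ d := by
  refine dimH_le_of_frequently_card_mul_rpow_le (C := 1)
    (ENNReal.tendsto_pow_atTop_nhds_zero_of_lt_one (by simp : (2⁻¹ : ℝ≥0∞) < 1))
    (fun n (w : Fin (Nat.count p n) → Bool) =>
      {x ∈ playsFreeOn p s | ∀ i : Fin _, freeMoves p x i = w i})
    (.of_forall (ediam_setOf_freeMoves_eq_le p s))
    (.of_forall fun n x hx => mem_iUnion.2 ⟨fun i => freeMoves p x i, hx, fun _ => rfl⟩)
    (h.mono fun n hn => ?_)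
  calc (Fintype.card (Fin (Nat.count p n) → Bool) : ℝ≥0∞) * (2⁻¹ ^ n) ^ (d : ℝ)
      = 2 ^ (Nat.count p n : ℝ) * (2⁻¹ ^ n) ^ (d : ℝ) := by simp
    _ ≤ 2 ^ (d * n : ℝ) * (2⁻¹ ^ n) ^ (d : ℝ) := by
        gcongr
        · exact one_le_two
        · exact_mod_cast hn
    _ = (2 ^ n * 2⁻¹ ^ n) ^ (d : ℝ) := by
        rw [ENNReal.mul_rpow_of_nonneg _ _ d.coe_nonneg, mul_comm (d : ℝ), ENNReal.rpow_mul,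
          ENNReal.rpow_natCast]
    _ = (1 : ℝ≥0) := by
        rw [← mul_pow, ENNReal.mul_inv_cancel two_ne_zero ENNReal.ofNat_ne_top, one_pow,
          ENNReal.one_rpow, ENNReal.coe_one]

end FreeMoves

theorem tendsto_count_modEq_div_atTop {r : ℕ} (hr : 0 < r) (v : ℕ) :
    Tendsto (fun n : ℕ => (Nat.count (· ≡ v [MOD r]) n : ℝ≥0∞) / n) atTop (𝓝 (r : ℝ≥0∞)⁻¹) := by
  have hfloor : Tendsto (fun n : ℕ => ((n / r : ℕ) : ℝ) / n) atTop (𝓝 (r : ℝ)⁻¹) := by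
    refine ((tendsto_nat_floor_mul_div_atTop (by positivity)).comp
      tendsto_natCast_atTop_atTop).congr fun n => ?_
    rw [Function.comp_apply, inv_mul_eq_div, Nat.floor_div_eq_div]
  have herror : Tendsto (fun n : ℕ => (if v % r < n % r then (1 : ℝ) else 0) / n) atTop (𝓝 0) :=
    tendsto_bdd_div_atTop_nhds_zero (b := 0) (B := 1)
      (.of_forall fun n => by split_ifs <;> simp) (.of_forall fun n => by split_ifs <;> simp)
      tendsto_natCast_atTop_atTop
  have hreal : Tendsto (fun n : ℕ => (Nat.count (· ≡ v [MOD r]) n : ℝ) / n) atTop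
      (𝓝 (r : ℝ)⁻¹) := by
    simpa [Nat.count_modEq_card _ hr, add_div] using hfloor.add herror
  convert ENNReal.tendsto_ofReal hreal using 2 with n
  · rcases eq_or_ne n 0 with rfl | hn
    · simp
    · rw [ENNReal.ofReal_div_of_pos (by positivity), ENNReal.ofReal_natCast, ENNReal.ofReal_natCast]
  · rw [ENNReal.ofReal_inv_of_pos (by positivity), ENNReal.ofReal_natCast]

theorem dimH_plays_of_strategy_general (p : ℕ → Prop) [DecidablePred p] (s : List Bool → Bool) :
    dimH (playsFreeOn p s) = liminf (fun n : ℕ => (Nat.count p n : ℝ≥0∞) / n) atTop := by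
  refine le_antisymm (le_of_forall_gt_imp_ge_of_dense fun a ha => ?_)
    (ENNReal.le_of_forall_nnreal_lt fun d hd => le_dimH_playsFreeOn ?_ s)
  · obtain ⟨d, hd, hda⟩ := ENNReal.lt_iff_exists_nnreal_btwn.1 ha
    refine (dimH_playsFreeOn_le ?_ s).trans hda.le
    refine (frequently_lt_of_liminf_lt isCobounded_ge_of_top hd).mono fun n hn => ?_
    have := (ENNReal.div_le_iff_le_mul (by simp) (by simp)).1 hn.le
    exact_mod_cast this
  · filter_upwards [eventually_lt_of_lt_liminf hd] with n hn
    have := ENNReal.mul_le_of_le_div hn.le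
    exact_mod_cast this

theorem dimH_playsFreeOn_modEq {r : ℕ} (hr : 0 < r) (v : ℕ) (s : List Bool → Bool) :
    dimH (playsFreeOn (· ≡ v [MOD r]) s) = (r : ℝ≥0∞)⁻¹ :=
  (dimH_plays_of_strategy_general _ s).trans (tendsto_count_modEq_div_atTop hr v).liminf_eq

/-- For every pure strategy of either player in the binary Gale–Stewart game, the set of
plays consistent with it has Hausdorff dimension `1/2`. -/
theorem dimH_plays_of_strategy :
    (∀ sI : List Bool → Bool, dimH {x : ℕ → Bool | ConsistentI sI x} = 1 / 2) ∧
    (∀ sII : List Bool → Bool, dimH {x : ℕ → Bool | ConsistentII sII x} = 1 / 2) := by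
  refine ⟨fun s => ?_, fun s => ?_⟩
  · simpa [playsFreeOn, ConsistentI, Nat.ModEq, Nat.even_iff] using
      dimH_playsFreeOn_modEq two_pos 1 s
  · simpa [playsFreeOn, ConsistentII, Nat.ModEq, Nat.odd_iff] using
      dimH_playsFreeOn_modEq two_pos 0 s
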